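/- For every t ∈ [0, T) and every x > 0, almost surely P(max_{t ≤ u ≤ T} X^x_u ≥ L | F_t) = Z(t, X^x_t); in particular the Azéma supermartingale of the last exit time θ = sup{t ∈ [0,T] : X^x_t ≥ L} equals Z(t, X^x_t). -/

import Mathlib

open MeasureTheory ProbabilityTheory Real Set Filter

noncomputable section

/-- Geometric Brownian motion with parameters `r`, `σ`, started at `x`,
driven by the process `W`: `X^x_t = x · exp((r - σ²/2)t + σ W_t)`. -/
def GBM {Ω : Type} (r σ x : ℝ) (W : ℝ → Ω → ℝ) (t : ℝ) (ω : Ω) : ℝ :=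
  x * Real.exp ((r - σ ^ 2 / 2) * t + σ * W t ω)

/-- `W` is a standard Brownian motion with respect to the filtration `F` under the
probability measure `P`: it starts at `0`, has continuous paths, is adapted to `F`,
has Gaussian increments `W t - W s ∼ N(0, t - s)`, and its increments after time `s`
are independent of `F s`. -/
structure IsStdBM {Ω : Type} [mΩ : MeasurableSpace Ω] (P : Measure Ω)
    (F : Filtration ℝ mΩ) (W : ℝ → Ω → ℝ) : Prop where
  init : ∀ ω, W 0 ω = 0
  cont : ∀ ω, Continuous fun t => W t ω
  adapted : ∀ t : ℝ, Measurable[F t] (W t)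
  incr_law : ∀ s t : ℝ, 0 ≤ s → s ≤ t →
      Measure.map (fun ω => W t ω - W s ω) P = gaussianReal 0 (Real.toNNReal (t - s))
  incr_indep : ∀ s t : ℝ, 0 ≤ s → s ≤ t →
      Indep (MeasurableSpace.comap (fun ω => W t ω - W s ω) Real.measurableSpace) (F s) P

/-- The standard normal cumulative distribution function `Φ`. -/
def stdCDF (y : ℝ) : ℝ := ∫ z in Iic y, Real.exp (-z ^ 2 / 2) / Real.sqrt (2 * π)

/-- The finite-horizon Azéma supermartingale function `Z(t,x)` (with `α = 2r/σ² - 1`):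
for `t < T`, `Z(t,x) = min{Φ(d₁) + (L/x)^α Φ(d₂), 1}`, and at `t = T` it is `1` for
`x ≥ L` and `0` for `x < L`. -/
def Zt (r σ L T t x : ℝ) : ℝ :=
  if t < T then
    min (stdCDF ((-Real.log (L / x) + (r - σ ^ 2 / 2) * (T - t)) / (σ * Real.sqrt (T - t))) +
        (L / x) ^ (2 * r / σ ^ 2 - 1) *
          stdCDF ((-Real.log (L / x) - (r - σ ^ 2 / 2) * (T - t)) / (σ * Real.sqrt (T - t)))) 1
  else if L ≤ x then 1 else 0

/-- The finite-horizon gain function `G(t,x) = (K - x)⁺ · Z(t,x)`. -/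
def gainT (r σ L K T t x : ℝ) : ℝ := max (K - x) 0 * Zt r σ L T t x

/-!
In the coordinate `log (X / L) / σ`, geometric Brownian motion becomes a Brownian motion `V` with
drift `ν` and the barrier becomes `0`. By Girsanov's tilting of the reflection principle, the payoff
`1_{z ≥ 0} (1 + exp (-2νz))` has a conditional expectation `h (T - u, V u)` that equals `1` on the
barrier. Stopping this martingale when `V` first becomes positive shows that, on `{V t ≤ 0}`, the
conditional expectation `h (T - t, V t)` of the payoff is the conditional probability of entering
`(0, ∞)` before `T`, since a payoff is received only after such an entry.

Perturbing the starting point shows that `[0, ∞)` is reached with the same conditional probability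
as `(0, ∞)`. The two hitting events are nested, so they agree almost surely, and both events of the
theorem lie between them.
-/

section Gaussian

lemma stdCDF_eq_measureReal_Iic (x : ℝ) : stdCDF x = (gaussianReal 0 1).real (Iic x) := by
  rw [measureReal_def, gaussianReal_apply_eq_integral 0 one_ne_zero,
    ENNReal.toReal_ofReal (integral_nonneg fun z => gaussianPDFReal_nonneg _ _ _), stdCDF]
  congr 1 with z
  rw [gaussianPDFReal]
  simp only [NNReal.coe_one, mul_one, sub_zero]
  rw [div_eq_inv_mul]

lemma stdCDF_nonneg (x : ℝ) : 0 ≤ stdCDF x :=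
  stdCDF_eq_measureReal_Iic x ▸ measureReal_nonneg

lemma stdCDF_le_one (x : ℝ) : stdCDF x ≤ 1 :=
  stdCDF_eq_measureReal_Iic x ▸ measureReal_le_one

lemma continuous_stdCDF : Continuous stdCDF := by
  have h_int : Integrable fun z : ℝ => Real.exp (-z ^ 2 / 2) / Real.sqrt (2 * π) := by
    convert integrable_gaussianPDFReal 0 1 using 2 with z
    simp [gaussianPDFReal, div_eq_inv_mul]
  have h_split : stdCDF = fun x => stdCDF 0 +
      ∫ z in (0 : ℝ)..x, Real.exp (-z ^ 2 / 2) / Real.sqrt (2 * π) := by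
    ext x
    rw [← intervalIntegral.integral_Iic_sub_Iic h_int.integrableOn h_int.integrableOn]
    simp only [stdCDF, add_sub_cancel]
  rw [h_split]
  exact continuous_const.add (intervalIntegral.continuous_primitive
    (fun _ _ => h_int.intervalIntegrable) 0)

lemma measureReal_gaussianReal_Ici (m x : ℝ) {v : NNReal} (hv : v ≠ 0) :
    (gaussianReal m v).real (Ici x) = stdCDF ((m - x) / √v) := by
  have h_sqrt : 0 < √(v : ℝ) := Real.sqrt_pos.2 (by positivity)
  have h_map : (gaussianReal 0 1).map (fun z => m - √v * z) = gaussianReal m v := by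
    change (gaussianReal 0 1).map ((fun z => m - z) ∘ fun z => √v * z) = _
    rw [← Measure.map_map (by fun_prop) (by fun_prop), gaussianReal_map_const_mul,
      gaussianReal_map_const_sub]
    congr 1
    · simp
    · ext; simp
  rw [← h_map, map_measureReal_apply (by fun_prop) measurableSet_Ici, stdCDF_eq_measureReal_Iic]
  congr 1
  ext z
  rw [mem_preimage, mem_Ici, mem_Iic, le_div_iff₀' h_sqrt, le_sub_comm]

lemma stdCDF_add_stdCDF_neg (x : ℝ) : stdCDF x + stdCDF (-x) = 1 := by
  have := nullSingletonClass_gaussianReal (μ := 0) one_ne_zero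
  have h_neg : stdCDF (-x) = (gaussianReal 0 1).real (Ici x) := by
    simp [measureReal_gaussianReal_Ici]
  rw [h_neg, stdCDF_eq_measureReal_Iic, ← measureReal_congr Ioi_ae_eq_Ici, ← compl_Iic]
  exact probReal_add_probReal_compl measurableSet_Iic

lemma setIntegral_exp_mul_gaussianReal (m c : ℝ) {v : NNReal} (hv : v ≠ 0) {s : Set ℝ}
    (hs : MeasurableSet s) :
    ∫ z in s, Real.exp (c * z) ∂gaussianReal m v
      = Real.exp (c * m + v * c ^ 2 / 2) * (gaussianReal (m + v * c) v).real s := by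
  have h_tilt (z : ℝ) : gaussianPDFReal m v z * Real.exp (c * z)
      = Real.exp (c * m + v * c ^ 2 / 2) * gaussianPDFReal (m + v * c) v z := by
    have hv' : (v : ℝ) ≠ 0 := by exact_mod_cast hv
    simp only [gaussianPDFReal]
    rw [mul_assoc, mul_left_comm (Real.exp _), ← Real.exp_add, ← Real.exp_add]
    congr 2
    field_simp
    ring
  rw [measureReal_def, gaussianReal_apply_eq_integral _ hv,
    ENNReal.toReal_ofReal (integral_nonneg fun z => gaussianPDFReal_nonneg _ _ _),
    ← integral_const_mul, ← integral_indicator hs, integral_gaussianReal_eq_integral_smul hv,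
    ← integral_indicator hs]
  congr 1 with z
  by_cases hz : z ∈ s <;> simp [hz, h_tilt]

lemma stdCDF_neg_sub_le {p : ℝ} (hp : 0 ≤ p) (q : ℝ) :
    stdCDF (-p - q) ≤ Real.exp (-(2 * p * q)) * stdCDF (p - q) := by
  have h_tilt := setIntegral_exp_mul_gaussianReal 0 (-(2 * p)) one_ne_zero
    (measurableSet_Ici (a := q - p))
  have h_mass : (gaussianReal 0 1).real (Ici (q - p)) = stdCDF (p - q) := by
    simp [measureReal_gaussianReal_Ici]
  have h_bound : ∫ z in Ici (q - p), Real.exp (-(2 * p) * z) ∂gaussianReal 0 1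
      ≤ ∫ _ in Ici (q - p), Real.exp (-(2 * p) * (q - p)) ∂gaussianReal 0 1 := by
    refine setIntegral_mono_on (integrable_exp_mul_gaussianReal _).integrableOn
      (integrable_const _).integrableOn measurableSet_Ici fun z hz => ?_
    exact Real.exp_le_exp.2 (mul_le_mul_of_nonpos_left hz (by linarith))
  rw [setIntegral_const, h_mass, smul_eq_mul] at h_bound
  calc stdCDF (-p - q)
      = Real.exp (-(2 * p ^ 2)) *
          ∫ z in Ici (q - p), Real.exp (-(2 * p) * z) ∂gaussianReal 0 1 := by
        rw [h_tilt, measureReal_gaussianReal_Ici _ _ one_ne_zero, ← mul_assoc, ← Real.exp_add,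
          NNReal.coe_one, Real.sqrt_one]
        ring_nf
        rw [Real.exp_zero, one_mul]
    _ ≤ Real.exp (-(2 * p ^ 2)) * (stdCDF (p - q) * Real.exp (-(2 * p) * (q - p))) := by gcongr
    _ = Real.exp (-(2 * p * q)) * stdCDF (p - q) := by
        rw [mul_left_comm, ← Real.exp_add, mul_comm]
        ring_nf

end Gaussian

section HittingProbability

/-- The Bachelier–Lévy formula for the probability that a Brownian motion with drift `ν` and unit
variance, started at `y ≤ 0`, reaches `0` before time `τ`. For `y > 0` the formula exceeds the
probability, which is then `1`. -/
def hitProb (ν τ y : ℝ) : ℝ :=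
  stdCDF ((y + ν * τ) / √τ) + Real.exp (-(2 * ν * y)) * stdCDF ((y - ν * τ) / √τ)

/-- The payoff `1_{z ≥ 0} (1 + exp (-2νz))` of the reflection principle for Brownian motion with
drift `ν`: its expectation at a time `τ` later is `hitProb ν τ`, which equals `1` at the
barrier `0`. -/
def reflectedPayoff (ν : ℝ) : ℝ → ℝ :=
  (Ici 0).indicator fun z => 1 + Real.exp (-(2 * ν * z))

variable {ν τ y : ℝ}

lemma hitProb_nonneg : 0 ≤ hitProb ν τ y :=
  add_nonneg (stdCDF_nonneg _) (mul_nonneg (Real.exp_pos _).le (stdCDF_nonneg _))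

lemma hitProb_le_one_add_exp : hitProb ν τ y ≤ 1 + Real.exp (-(2 * ν * y)) :=
  add_le_add (stdCDF_le_one _) (mul_le_of_le_one_right (Real.exp_pos _).le (stdCDF_le_one _))

lemma hitProb_le_of_abs_le_one (hy : |y| ≤ 1) : hitProb ν τ y ≤ 1 + Real.exp (2 * |ν|) := by
  refine hitProb_le_one_add_exp.trans (add_le_add_right (Real.exp_le_exp.2 ?_) 1)
  calc -(2 * ν * y) ≤ |2 * ν * y| := neg_le_abs _
    _ = 2 * |ν| * |y| := by rw [abs_mul, abs_mul, abs_two]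
    _ ≤ 2 * |ν| := mul_le_of_le_one_right (by positivity) hy

lemma hitProb_neg_sub_one :
    hitProb ν τ (-y) - 1 = Real.exp (2 * ν * y) * (1 - hitProb ν τ y) := by
  have h_plus : stdCDF ((-y - ν * τ) / √τ) = 1 - stdCDF ((y + ν * τ) / √τ) := by
    rw [← stdCDF_add_stdCDF_neg ((y + ν * τ) / √τ)]
    ring_nf
  have h_minus : stdCDF ((-y + ν * τ) / √τ) = 1 - stdCDF ((y - ν * τ) / √τ) := by
    rw [← stdCDF_add_stdCDF_neg ((y - ν * τ) / √τ)]
    ring_nf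
  have h_exp : Real.exp (2 * ν * y) * Real.exp (-(2 * ν * y)) = 1 := by
    rw [← Real.exp_add, add_neg_cancel, Real.exp_zero]
  rw [hitProb, hitProb, h_plus, h_minus, mul_neg, neg_neg]
  linear_combination stdCDF ((y - ν * τ) / √τ) * h_exp

lemma hitProb_zero : hitProb ν τ 0 = 1 := by
  have h := hitProb_neg_sub_one (ν := ν) (τ := τ) (y := 0)
  rw [neg_zero, mul_zero, Real.exp_zero] at h
  linarith

lemma one_le_hitProb (hτ : 0 < τ) (hy : 0 ≤ y) : 1 ≤ hitProb ν τ y := by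
  have h_sq : √τ * √τ = τ := Real.mul_self_sqrt hτ.le
  have h_sqrt : √τ ≠ 0 := (Real.sqrt_pos.2 hτ).ne'
  have h_tail := stdCDF_neg_sub_le (p := y / √τ) (by positivity) (ν * √τ)
  have h_div (z : ℝ) : z / √τ - ν * √τ = (z - ν * τ) / √τ := by
    field_simp
    rw [sq, h_sq, mul_comm]
  have h_exp : 2 * (y / √τ) * (ν * √τ) = 2 * ν * y := by field_simp
  rw [← neg_div, h_div, h_div, h_exp] at h_tail
  have h_refl := stdCDF_add_stdCDF_neg ((y + ν * τ) / √τ)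
  rw [← neg_div, neg_add'] at h_refl
  rw [hitProb]
  linarith

lemma hitProb_le_one (hτ : 0 < τ) (hy : y ≤ 0) : hitProb ν τ y ≤ 1 := by
  have h_neg : 0 ≤ Real.exp (2 * ν * y) * (1 - hitProb ν τ y) :=
    hitProb_neg_sub_one ▸ sub_nonneg.2 (one_le_hitProb hτ (neg_nonneg.2 hy))
  exact sub_nonneg.1 (nonneg_of_mul_nonneg_right h_neg (Real.exp_pos _))

lemma continuousOn_hitProb (ν : ℝ) :
    ContinuousOn (fun p : ℝ × ℝ => hitProb ν p.1 p.2) (Ioi 0 ×ˢ univ) := by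
  have h_sqrt : ∀ p ∈ Ioi (0 : ℝ) ×ˢ (univ : Set ℝ), √p.1 ≠ 0 := fun p hp =>
    (Real.sqrt_pos.2 hp.1).ne'
  unfold hitProb
  exact (continuous_stdCDF.comp_continuousOn (.div (by fun_prop) (by fun_prop) h_sqrt)).add
    (.mul (by fun_prop)
      (continuous_stdCDF.comp_continuousOn (.div (by fun_prop) (by fun_prop) h_sqrt)))

lemma continuous_hitProb (ν τ : ℝ) : Continuous (hitProb ν τ) := by
  unfold hitProb
  exact (continuous_stdCDF.comp (by fun_prop)).add
    (.mul (by fun_prop) (continuous_stdCDF.comp (by fun_prop)))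

lemma tendsto_hitProb_one {v : ℝ → ℝ} {u T : ℝ} (hv : ContinuousAt v u) (hvu : v u = 0)
    (huT : u < T) : Tendsto (fun s => hitProb ν (T - s) (v s)) (nhds u) (nhds 1) := by
  have h_cont : Tendsto (fun p : ℝ × ℝ => hitProb ν p.1 p.2) (nhds (T - u, 0)) (nhds 1) := by
    simpa only [ContinuousAt, hitProb_zero] using (continuousOn_hitProb ν).continuousAt
      (x := (T - u, 0)) (prod_mem_nhds (Ioi_mem_nhds (sub_pos.2 huT)) univ_mem)
  have h_pair : Tendsto (fun s => (T - s, v s)) (nhds u) (nhds (T - u, 0)) :=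
    (tendsto_const_nhds.sub tendsto_id).prodMk_nhds (hvu ▸ hv.tendsto)
  exact (h_cont.comp h_pair :)

lemma measurable_reflectedPayoff : Measurable (reflectedPayoff ν) :=
  Measurable.indicator (by fun_prop) measurableSet_Ici

lemma integrable_reflectedPayoff (ν m : ℝ) (v : NNReal) :
    Integrable (reflectedPayoff ν) (gaussianReal m v) := by
  have h_exp := integrable_exp_mul_gaussianReal (μ := m) (v := v) (-(2 * ν))
  simp only [neg_mul] at h_exp
  exact ((integrable_const 1).add h_exp).indicator measurableSet_Ici

lemma integral_reflectedPayoff (ν y : ℝ) {v : NNReal} (hv : v ≠ 0) :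
    ∫ z, reflectedPayoff ν z ∂gaussianReal (y + ν * v) v = hitProb ν v y := by
  have h_exp := integrable_exp_mul_gaussianReal (μ := y + ν * v) (v := v) (-(2 * ν))
  have h_tilt := setIntegral_exp_mul_gaussianReal (y + ν * v) (-(2 * ν)) hv
    (measurableSet_Ici (a := 0))
  simp only [neg_mul] at h_exp h_tilt
  simp only [reflectedPayoff]
  rw [integral_indicator measurableSet_Ici, integral_add (integrable_const _).integrableOn
    h_exp.integrableOn, setIntegral_const, smul_eq_mul, mul_one, h_tilt,
    measureReal_gaussianReal_Ici _ _ hv, measureReal_gaussianReal_Ici _ _ hv, hitProb]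
  ring_nf

end HittingProbability

section CondExp

variable {Ω α β E : Type*} {m mΩ : MeasurableSpace Ω} {mα : MeasurableSpace α}
  {mβ : MeasurableSpace β} {μ : Measure Ω} [IsFiniteMeasure μ]

section Freezing

variable [StandardBorelSpace β] [Nonempty β] [NormedAddCommGroup E] [NormedSpace ℝ E]
  [CompleteSpace E] {X : Ω → α} {Y : Ω → β} {f : α × β → E}

lemma condExp_comp_prodMk_of_indepFun (hX : Measurable X) (hY : Measurable Y)
    (hXY : IndepFun X Y μ) (hf : StronglyMeasurable f)
    (hf_int : Integrable (fun ω => f (X ω, Y ω)) μ) :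
    μ[fun ω => f (X ω, Y ω) | mα.comap X] =ᵐ[μ] fun ω => ∫ y, f (X ω, y) ∂μ.map Y := by
  have h_law : condDistrib Y X μ =ᵐ[μ.map X] Kernel.const α (μ.map Y) :=
    condDistrib_ae_eq_of_measure_eq_compProd X hY.aemeasurable (by
      rw [Measure.compProd_const, hXY.map_prod_eq_prod_map_map hX.aemeasurable hY.aemeasurable])
  filter_upwards [condExp_prod_ae_eq_integral_condDistrib hX hY.aemeasurable hf hf_int,
    ae_of_ae_map hX.aemeasurable h_law] with ω h_condExp h_kernel
  rw [h_condExp, h_kernel, Kernel.const_apply]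

lemma condExp_comp_prodMk_of_indep (hm : m ≤ mΩ) (hX : Measurable[m] X) (hY : Measurable Y)
    (hY_indep : Indep (mβ.comap Y) m μ) (hf : StronglyMeasurable f)
    (hf_int : Integrable (fun ω => f (X ω, Y ω)) μ) :
    μ[fun ω => f (X ω, Y ω) | m] =ᵐ[μ] fun ω => ∫ y, f (X ω, y) ∂μ.map Y := by
  have h_id : @IndepFun Ω Ω β mΩ m mβ id Y μ := by
    refine (@IndepFun_iff_Indep Ω Ω β mΩ m mβ id Y μ).2 ?_
    rw [@MeasurableSpace.comap_id _ m]
    exact hY_indep.symm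
  have h := condExp_comp_prodMk_of_indepFun (mα := m) (f := fun p => f (X p.1, p.2))
    (measurable_id'' hm) hY h_id
    (hf.comp_measurable ((hX.comp measurable_fst).prodMk measurable_snd)) hf_int
  rwa [@MeasurableSpace.comap_id _ m] at h

end Freezing

lemma condExp_sum_indicator_congr {ι : Type*} {m' : ι → MeasurableSpace Ω}
    (hm : ∀ i, m ≤ m' i) (hm' : ∀ i, m' i ≤ mΩ) (s : Finset ι) {G : ι → Set Ω}
    (hG : ∀ i, MeasurableSet[m' i] (G i)) {f : Ω → ℝ} (hf : Integrable f μ) {g : ι → Ω → ℝ}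
    (hg : ∀ i ∈ s, μ[f | m' i] =ᵐ[μ] g i) :
    μ[∑ i ∈ s, (G i).indicator f | m] =ᵐ[μ] μ[∑ i ∈ s, (G i).indicator (g i) | m] := by
  have h_summand : ∀ i ∈ s, μ[(G i).indicator f | m] =ᵐ[μ] μ[(G i).indicator (g i) | m] :=
    fun i hi => calc μ[(G i).indicator f | m]
        =ᵐ[μ] μ[μ[(G i).indicator f | m' i] | m] := (condExp_condExp_of_le (hm i) (hm' i)).symm
      _ =ᵐ[μ] μ[(G i).indicator (g i) | m] :=
        condExp_congr_ae ((condExp_indicator hf (hG i)).trans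
          ((hg i hi).mono fun ω h => by simp only [indicator, h]))
  have h_int : ∀ i ∈ s, Integrable (g i) μ := fun i hi => integrable_condExp.congr (hg i hi)
  calc μ[∑ i ∈ s, (G i).indicator f | m]
      =ᵐ[μ] ∑ i ∈ s, μ[(G i).indicator f | m] :=
        condExp_finsetSum (fun i _ => hf.indicator (hm' i _ (hG i))) m
    _ =ᵐ[μ] ∑ i ∈ s, μ[(G i).indicator (g i) | m] := by
        filter_upwards [(s.eventually_all).2 h_summand] with ω h
        simp only [Finset.sum_apply]
        exact Finset.sum_congr rfl h
    _ =ᵐ[μ] μ[∑ i ∈ s, (G i).indicator (g i) | m] :=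
        (condExp_finsetSum (fun i hi => (h_int i hi).indicator (hm' i _ (hG i))) m).symm

lemma condExp_indicator_one_of_tendsto (hm : m ≤ mΩ) {A : ℕ → Set Ω} {A' : Set Ω}
    {g : ℕ → Ω → ℝ} {g' : Ω → ℝ} {C : ℝ} (hA : ∀ k, MeasurableSet (A k))
    (hA_lim : ∀ ω, ∀ᶠ k in atTop, ω ∈ A k ↔ ω ∈ A')
    (hg : ∀ k, StronglyMeasurable[m] (g k)) (hg_bound : ∀ k ω, ‖g k ω‖ ≤ C)
    (hg_lim : ∀ ω, Tendsto (fun k => g k ω) atTop (nhds (g' ω)))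
    (h : ∀ k, μ[(A k).indicator fun _ => (1 : ℝ) | m] =ᵐ[μ] g k) :
    μ[A'.indicator fun _ => (1 : ℝ) | m] =ᵐ[μ] g' := by
  have hg_int (k : ℕ) : Integrable (g k) μ :=
    .of_bound ((hg k).mono hm).aestronglyMeasurable C (ae_of_all μ (hg_bound k))
  have hg' : StronglyMeasurable[m] g' := stronglyMeasurable_of_tendsto atTop hg
    (tendsto_pi_nhds.2 hg_lim)
  have hg'_int : Integrable g' μ := .of_bound (hg'.mono hm).aestronglyMeasurable C
    (ae_of_all μ fun ω => le_of_tendsto (hg_lim ω).norm (.of_forall fun k => hg_bound k ω))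
  rw [← condExp_of_stronglyMeasurable hm hg' hg'_int]
  refine tendsto_condExp_unique (fun k => (A k).indicator fun _ => (1 : ℝ)) g _ g'
    (fun k => (integrable_const 1).indicator (hA k)) hg_int
    (ae_of_all μ fun ω => (tendsto_indicator_const_apply_iff_eventually _ _ _).2 (hA_lim ω))
    (ae_of_all μ hg_lim) (fun _ => 1) (integrable_const 1) (fun _ => C) (integrable_const C)
    (fun k => ae_of_all μ fun ω => ?_) (fun k => ae_of_all μ (hg_bound k)) fun k => ?_
  · exact (norm_indicator_le_norm_self _ ω).trans_eq norm_one
  · rw [condExp_of_stronglyMeasurable hm (hg k) (hg_int k)]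
    exact h k

lemma ae_eq_of_subset_of_condExp_indicator_ae_eq (hm : m ≤ mΩ) {A B : Set Ω}
    (hAB : A ⊆ B) (hA : MeasurableSet A) (hB : MeasurableSet B)
    (h : μ[A.indicator fun _ => (1 : ℝ) | m] =ᵐ[μ] μ[B.indicator fun _ => (1 : ℝ) | m]) :
    A =ᵐ[μ] B := by
  have h_measure : μ.real A = μ.real B := by
    rw [← integral_indicator_one hA, ← integral_indicator_one hB]
    exact (integral_condExp hm).symm.trans ((integral_congr_ae h).trans (integral_condExp hm))
  refine ae_eq_of_subset_of_measure_ge hAB ?_ hA.nullMeasurableSet (measure_ne_top μ B)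
  exact ((measureReal_eq_measureReal_iff).1 h_measure).ge

end CondExp

section DriftedBM

/-- Brownian motion with drift `ν` started at `b`. In the coordinate `log (X / L) / σ`, geometric
Brownian motion is of this form and the barrier `L` becomes `0`. -/
def driftedBM {Ω : Type*} (W : ℝ → Ω → ℝ) (b ν u : ℝ) (ω : Ω) : ℝ :=
  b + ν * u + W u ω

lemma driftedBM_add {Ω : Type*} (W : ℝ → Ω → ℝ) (b ν ε u : ℝ) (ω : Ω) :
    driftedBM W (b + ε) ν u ω = driftedBM W b ν u ω + ε := by
  simp only [driftedBM]
  ring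

variable {Ω : Type} [mΩ : MeasurableSpace Ω] {P : Measure Ω} {F : Filtration ℝ mΩ}
  {W : ℝ → Ω → ℝ} {s T : ℝ}

namespace IsStdBM

lemma continuous_driftedBM (hW : IsStdBM P F W) (b ν : ℝ) (ω : Ω) :
    Continuous fun u => driftedBM W b ν u ω :=
  (by fun_prop : Continuous fun u => b + ν * u).add (hW.cont ω)

lemma measurable_driftedBM (hW : IsStdBM P F W) (b ν u : ℝ) :
    Measurable[F u] (driftedBM W b ν u) :=
  (hW.adapted u).const_add (b + ν * u)

lemma measurable_driftedBM' (hW : IsStdBM P F W) (b ν u : ℝ) : Measurable (driftedBM W b ν u) :=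
  (hW.measurable_driftedBM b ν u).mono (F.le u) le_rfl

lemma map_driftedBM (hW : IsStdBM P F W) (b ν : ℝ) (hT : 0 ≤ T) :
    P.map (driftedBM W b ν T) = gaussianReal (b + ν * T) T.toNNReal := by
  have h_map : P.map (W T) = gaussianReal 0 T.toNNReal := by
    simpa [hW.init] using hW.incr_law 0 T le_rfl hT
  have h_meas : Measurable (W T) := (hW.adapted T).mono (F.le T) le_rfl
  change P.map ((fun z => b + ν * T + z) ∘ W T) = _
  rw [← Measure.map_map (by fun_prop) h_meas, h_map, gaussianReal_map_const_add, zero_add]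

lemma integrable_reflectedPayoff_driftedBM (hW : IsStdBM P F W) (b ν : ℝ) (hT : 0 ≤ T) :
    Integrable (fun ω => reflectedPayoff ν (driftedBM W b ν T ω)) P :=
  (hW.map_driftedBM b ν hT ▸ integrable_reflectedPayoff ν _ _).comp_measurable
    (hW.measurable_driftedBM' b ν T)

lemma ae_driftedBM_ne_zero (hW : IsStdBM P F W) (b ν : ℝ) (hT : 0 < T) :
    ∀ᵐ ω ∂P, driftedBM W b ν T ω ≠ 0 := by
  have := nullSingletonClass_gaussianReal (μ := b + ν * T) (Real.toNNReal_pos.2 hT).ne'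
  have h_ae : ∀ᵐ z ∂P.map (driftedBM W b ν T), z ≠ 0 := by
    rw [hW.map_driftedBM b ν hT.le]
    exact Measure.ae_ne _ 0
  exact ae_of_ae_map (hW.measurable_driftedBM' b ν T).aemeasurable h_ae

lemma condExp_reflectedPayoff_driftedBM [IsFiniteMeasure P] (hW : IsStdBM P F W) (b ν : ℝ)
    (hs : 0 ≤ s) (hsT : s < T) :
    P[fun ω => reflectedPayoff ν (driftedBM W b ν T ω) | F s]
      =ᵐ[P] fun ω => hitProb ν (T - s) (driftedBM W b ν s ω) := by
  have h_split (ω : Ω) : driftedBM W b ν T ω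
      = driftedBM W b ν s ω + ν * (T - s) + (W T ω - W s ω) := by
    simp only [driftedBM]
    ring
  have h_meas : Measurable fun ω => W T ω - W s ω :=
    ((hW.adapted T).mono (F.le T) le_rfl).sub ((hW.adapted s).mono (F.le s) le_rfl)
  have h_payoff : Measurable fun p : ℝ × ℝ => reflectedPayoff ν (p.1 + ν * (T - s) + p.2) :=
    measurable_reflectedPayoff.comp (by fun_prop)
  have h_int := hW.integrable_reflectedPayoff_driftedBM b ν (hs.trans hsT.le)
  have h_mean (y : ℝ) : ∫ z, reflectedPayoff ν (y + ν * (T - s) + z)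
      ∂gaussianReal 0 (T - s).toNNReal = hitProb ν (T - s) y := by
    have h := integral_reflectedPayoff ν y (Real.toNNReal_pos.2 (sub_pos.2 hsT)).ne'
    have h_law := gaussianReal_map_const_add (μ := 0) (v := (T - s).toNNReal) (y + ν * (T - s))
    rwa [Real.coe_toNNReal _ (sub_pos.2 hsT).le, ← zero_add (y + _), ← h_law,
      integral_map (by fun_prop) measurable_reflectedPayoff.aestronglyMeasurable] at h
  simp only [h_split] at h_int ⊢
  refine (condExp_comp_prodMk_of_indep (F.le s) (hW.measurable_driftedBM b ν s) h_meas
    (hW.incr_indep s T hs hsT.le) h_payoff.stronglyMeasurable h_int).trans (.of_eq ?_)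
  simp only [hW.incr_law s T hs hsT.le, h_mean]

end IsStdBM

end DriftedBM

section GridPoint

/-- The `i`-th point of the `n`-th uniform grid of `[t, T)`, for `i = 0, …, n`. -/
def gridPoint (t T : ℝ) (n i : ℕ) : ℝ :=
  t + (T - t) * (i / (n + 1))

variable {t T u : ℝ}

lemma gridPoint_zero (n : ℕ) : gridPoint t T n 0 = t := by
  simp [gridPoint]

lemma monotone_gridPoint (htT : t ≤ T) (n : ℕ) : Monotone (gridPoint t T n) := fun i j hij => by
  have := sub_nonneg.2 htT
  unfold gridPoint
  gcongr

lemma le_gridPoint (htT : t ≤ T) (n i : ℕ) : t ≤ gridPoint t T n i :=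
  (gridPoint_zero n).symm.trans_le (monotone_gridPoint htT n i.zero_le)

lemma gridPoint_lt {n i : ℕ} (htT : t < T) (hi : i ≤ n) : gridPoint t T n i < T := by
  have h_ratio : (i : ℝ) / (n + 1) < 1 := by
    rw [div_lt_one (by positivity)]
    exact_mod_cast Nat.lt_succ_of_le hi
  have := mul_lt_mul_of_pos_left h_ratio (sub_pos.2 htT)
  rw [gridPoint]
  linarith

lemma eventually_exists_gridPoint_mem (hu : u ∈ Ico t T) {s : Set ℝ} (hs : s ∈ nhds u) :
    ∀ᶠ n in atTop, ∃ i ≤ n, gridPoint t T n i ∈ s := by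
  have h_pos : 0 < T - t := sub_pos.2 (hu.1.trans_lt hu.2)
  set a := (u - t) / (T - t) with ha
  have ha_nonneg : 0 ≤ a := div_nonneg (sub_nonneg.2 hu.1) h_pos.le
  have ha_lt : a < 1 := (div_lt_one h_pos).2 (by linarith [hu.2])
  have h_lim : Tendsto (fun n : ℕ => gridPoint t T n ⌊a * (n + 1)⌋₊) atTop (nhds u) := by
    have h_atTop : Tendsto (fun n : ℕ => (n : ℝ) + 1) atTop atTop :=
      tendsto_atTop_add_const_right _ _ tendsto_natCast_atTop_atTop
    have h_u : t + (T - t) * a = u := by rw [ha, mul_div_cancel₀ _ h_pos.ne', add_sub_cancel]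
    rw [← h_u]
    exact (((tendsto_nat_floor_mul_div_atTop ha_nonneg).comp h_atTop).const_mul (T - t)).const_add t
  filter_upwards [h_lim hs] with n hn
  refine ⟨_, Nat.lt_succ_iff.1 ((Nat.floor_lt (by positivity)).2 ?_), hn⟩
  push_cast
  exact mul_lt_of_lt_one_left (by positivity) ha_lt

end GridPoint

section FirstEntry

variable {v : ℝ → ℝ} {t T : ℝ}

lemma exists_entry_time (hv : Continuous v) (ht : v t ≤ 0) (hT : v T ≠ 0)
    (h_pos : ∃ u ∈ Icc t T, 0 < v u) :
    ∃ ρ ∈ Ico t T, v ρ = 0 ∧ (∀ u ∈ Icc t ρ, v u ≤ 0) ∧ ∀ b > ρ, ∃ u ∈ Ioo ρ b, 0 < v u := by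
  set S := {u | u ∈ Icc t T ∧ 0 < v u}
  have hS_bdd : BddBelow S := ⟨t, fun u hu => hu.1.1⟩
  obtain ⟨u₀, hu₀⟩ : S.Nonempty := h_pos
  have h_mem : sInf S ∈ Icc t T := ⟨le_csInf ⟨u₀, hu₀⟩ fun u hu => hu.1.1,
    (csInf_le hS_bdd hu₀).trans hu₀.1.2⟩
  have h_before : ∀ u ∈ Ico t (sInf S), v u ≤ 0 := fun u hu => by
    by_contra! h
    exact notMem_of_lt_csInf hu.2 hS_bdd ⟨⟨hu.1, hu.2.le.trans h_mem.2⟩, h⟩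
  have h_le : v (sInf S) ≤ 0 := by
    rcases h_mem.1.eq_or_lt with h | h
    · exact h ▸ ht
    · exact closure_minimal h_before (isClosed_le hv continuous_const)
        (by rw [closure_Ico h.ne]; exact ⟨h.le, le_rfl⟩)
  have h_ge : 0 ≤ v (sInf S) :=
    closure_minimal (fun u hu => hu.2.le) (isClosed_le continuous_const hv)
      (csInf_mem_closure ⟨u₀, hu₀⟩ hS_bdd)
  have h_zero := h_le.antisymm h_ge
  refine ⟨sInf S, ⟨h_mem.1, h_mem.2.lt_of_ne fun h => hT (h ▸ h_zero)⟩, h_zero, fun u hu => ?_,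
    fun b hb => ?_⟩
  · exact hu.2.eq_or_lt.elim (fun h => h ▸ h_le) fun h => h_before u ⟨hu.1, h⟩
  · obtain ⟨u, hu, hub⟩ := exists_lt_of_csInf_lt ⟨u₀, hu₀⟩ hb
    refine ⟨u, ⟨(csInf_le hS_bdd hu).lt_of_ne fun h => ?_, hub⟩, hu.2⟩
    exact (h ▸ hu.2).ne' h_zero

lemma exists_entry_time_forall_eventually_gridPoint (hv : Continuous v) (ht : v t ≤ 0)
    (hT : v T ≠ 0) (h_pos : ∃ u ∈ Icc t T, 0 < v u) :
    ∃ ρ ∈ Ico t T, v ρ = 0 ∧ ∀ s ∈ nhds ρ, ∀ᶠ n in atTop, ∃ i ∈ Finset.Ioc 0 n,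
      gridPoint t T n i ∈ s ∧ 0 < v (gridPoint t T n i) ∧ ∀ j < i, v (gridPoint t T n j) ≤ 0 := by
  obtain ⟨ρ, hρ, h_zero, h_before, h_after⟩ := exists_entry_time hv ht hT h_pos
  have htT : t ≤ T := hρ.1.trans hρ.2.le
  refine ⟨ρ, hρ, h_zero, fun s hs => ?_⟩
  obtain ⟨b, hb, hbs⟩ := exists_Ico_subset_of_mem_nhds hs ⟨T, hρ.2⟩
  obtain ⟨u, hu, hvu⟩ := h_after (min b T) (lt_min hb hρ.2)
  have h_nhds : Iio b ∩ {w | 0 < v w} ∈ nhds u :=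
    (isOpen_Iio.inter (isOpen_lt continuous_const hv)).mem_nhds
      ⟨hu.2.trans_le (min_le_left _ _), hvu⟩
  filter_upwards [eventually_exists_gridPoint_mem
    ⟨hρ.1.trans hu.1.le, hu.2.trans_le (min_le_right _ _)⟩ h_nhds] with n hn
  obtain ⟨k, hkn, hkb, hk_pos⟩ := hn
  have h_ex : ∃ i, 0 < v (gridPoint t T n i) := ⟨k, hk_pos⟩
  classical
  have h_find := Nat.find_spec h_ex
  have h_find_le : Nat.find h_ex ≤ k := Nat.find_min' h_ex hk_pos
  refine ⟨Nat.find h_ex, Finset.mem_Ioc.2 ⟨?_, h_find_le.trans hkn⟩, hbs ⟨?_, ?_⟩, h_find,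
    fun j hj => not_lt.1 (Nat.find_min h_ex hj)⟩
  · refine Nat.pos_of_ne_zero fun h => ?_
    rw [h, gridPoint_zero] at h_find
    exact h_find.not_ge ht
  · by_contra! h
    exact h_find.not_ge (h_before _ ⟨le_gridPoint htT _ _, h.le⟩)
  · exact (monotone_gridPoint htT n h_find_le).trans_lt hkb

end FirstEntry

section GridEntry

variable {Ω : Type*} {V κ : ℝ → Ω → ℝ} {t T : ℝ} {n i : ℕ} {ω : Ω}

/-- The event that the continuous process `V` starts at or below `0` at time `t` and becomes
positive before time `T`. -/
def entryEvent (V : ℝ → Ω → ℝ) (t T : ℝ) : Set Ω :=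
  {ω | V t ω ≤ 0 ∧ ∃ u ∈ Icc t T, 0 < V u ω}

/-- The event that `V` is positive for the first time on the `n`-th grid of `[t, T)` at the `i`-th
grid point, without exceeding `1` there. The cutoff `1` is harmless for continuous paths and fine
grids, and keeps functions of `V` such as `hitProb` bounded at the time of entry. -/
def gridEntry (V : ℝ → Ω → ℝ) (t T : ℝ) (n i : ℕ) : Set Ω :=
  {ω | (∀ j < i, V (gridPoint t T n j) ω ≤ 0) ∧ V (gridPoint t T n i) ω ∈ Ioc 0 1}

/-- The value of `κ` at the time when `V` enters `(0, 1]` along the `n`-th grid of `[t, T)`, and `0`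
if it does not do so after time `t`. -/
def gridEntryValue (V κ : ℝ → Ω → ℝ) (t T : ℝ) (n : ℕ) : Ω → ℝ :=
  ∑ i ∈ Finset.Ioc 0 n, (gridEntry V t T n i).indicator (κ (gridPoint t T n i))

lemma gridEntryValue_eq_of_mem (hi : i ∈ Finset.Ioc 0 n) (hω : ω ∈ gridEntry V t T n i) :
    gridEntryValue V κ t T n ω = κ (gridPoint t T n i) ω := by
  rw [gridEntryValue, Finset.sum_apply, Finset.sum_eq_single_of_mem i hi, indicator_of_mem hω]
  intro j _ hji
  refine indicator_of_notMem (fun hj => ?_) _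
  rcases hji.lt_or_gt with h | h
  · exact hj.2.1.not_ge (hω.1 j h)
  · exact hω.2.1.not_ge (hj.1 i h)

lemma gridEntryValue_eq_zero (h : ∀ i ∈ Finset.Ioc 0 n, ω ∉ gridEntry V t T n i) :
    gridEntryValue V κ t T n ω = 0 := by
  rw [gridEntryValue, Finset.sum_apply]
  exact Finset.sum_eq_zero fun i hi => indicator_of_notMem (h i hi) _

lemma abs_gridEntryValue_le {B : ℝ} (hB : 0 ≤ B) (hκ : ∀ u, V u ω ∈ Ioc 0 1 → |κ u ω| ≤ B) :
    |gridEntryValue V κ t T n ω| ≤ B := by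
  by_cases h : ∃ i ∈ Finset.Ioc 0 n, ω ∈ gridEntry V t T n i
  · obtain ⟨i, hi, hω⟩ := h
    rw [gridEntryValue_eq_of_mem hi hω]
    exact hκ _ hω.2
  · push Not at h
    rwa [gridEntryValue_eq_zero h, abs_zero]

lemma tendsto_gridEntryValue {c : Ω → ℝ} (htT : t < T) (hV : Continuous fun u => V u ω)
    (hVT : V T ω ≠ 0)
    (hκ : ∀ ρ ∈ Ico t T, V ρ ω = 0 → Tendsto (fun u => κ u ω) (nhds ρ) (nhds (c ω))) :
    Tendsto (fun n => gridEntryValue V κ t T n ω) atTop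
      (nhds ((entryEvent V t T).indicator c ω)) := by
  by_cases hω : ω ∈ entryEvent V t T
  · rw [indicator_of_mem hω]
    obtain ⟨ρ, hρ, h_zero, h_grid⟩ :=
      exists_entry_time_forall_eventually_gridPoint hV hω.1 hVT hω.2
    have h_near : ∀ᶠ u in nhds ρ, V u ω < 1 :=
      hV.continuousAt.eventually_lt continuousAt_const (h_zero.trans_lt one_pos)
    refine tendsto_def.2 fun s hs => ?_
    filter_upwards [h_grid _ (inter_mem (hκ ρ hρ h_zero hs) h_near)] with n hn
    obtain ⟨i, hi, ⟨h_mem, h_lt⟩, h_pos, h_first⟩ := hn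
    rwa [mem_preimage, gridEntryValue_eq_of_mem hi ⟨h_first, h_pos, le_of_lt h_lt⟩]
  · rw [indicator_of_notMem hω]
    refine tendsto_const_nhds.congr fun n => (gridEntryValue_eq_zero fun i hi h => hω ?_).symm
    obtain ⟨hi_pos, hi_le⟩ := Finset.mem_Ioc.1 hi
    exact ⟨gridPoint_zero (t := t) (T := T) n ▸ h.1 0 hi_pos, _,
      ⟨le_gridPoint htT.le _ _, (gridPoint_lt htT hi_le).le⟩, h.2.1⟩

variable {mΩ : MeasurableSpace Ω} {P : Measure Ω} {F : Filtration ℝ mΩ}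

lemma measurableSet_gridEntry (hV : ∀ u, Measurable[F u] (V u)) (htT : t ≤ T) (n i : ℕ) :
    MeasurableSet[F (gridPoint t T n i)] (gridEntry V t T n i) := by
  have h_adapted : ∀ j ≤ i, Measurable[F (gridPoint t T n i)] (V (gridPoint t T n j)) := fun j hj =>
    (hV _).mono (F.mono (monotone_gridPoint htT n hj)) le_rfl
  have h_eq : gridEntry V t T n i = (⋂ j, ⋂ _ : j < i, V (gridPoint t T n j) ⁻¹' Iic 0) ∩
      V (gridPoint t T n i) ⁻¹' Ioc 0 1 := by
    ext ω
    simp [gridEntry]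
  rw [h_eq]
  exact (MeasurableSet.iInter fun j => .iInter fun hj => h_adapted j hj.le measurableSet_Iic).inter
    (h_adapted i le_rfl measurableSet_Ioc)

lemma integrable_gridEntryValue (hV : ∀ u, Measurable[F u] (V u)) (htT : t < T)
    (hκ : ∀ u ∈ Ico t T, Integrable (κ u) P) (n : ℕ) :
    Integrable (gridEntryValue V κ t T n) P :=
  integrable_finsetSum' _ fun i hi =>
    (hκ _ ⟨le_gridPoint htT.le n i, gridPoint_lt htT (Finset.mem_Ioc.1 hi).2⟩).indicator
      (F.le _ _ (measurableSet_gridEntry hV htT.le n i))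

/-- Optional stopping at the first time `V` is positive, obtained by letting the grids get finer:
the grid entry times take finitely many values, and along them the martingale tends to `c`. -/
lemma condExp_indicator_entryEvent [IsFiniteMeasure P] {f : Ω → ℝ} {c B : ℝ} (htT : t < T)
    (hV : ∀ u, Measurable[F u] (V u)) (hV_cont : ∀ ω, Continuous fun u => V u ω)
    (hVT : ∀ᵐ ω ∂P, V T ω ≠ 0) (hf : Integrable f P)
    (hκ : ∀ u ∈ Ico t T, P[f | F u] =ᵐ[P] κ u)
    (hκ_bound : ∀ u ω, V u ω ∈ Ioc 0 1 → |κ u ω| ≤ B) (hB : 0 ≤ B)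
    (hκ_lim : ∀ ω, ∀ ρ ∈ Ico t T, V ρ ω = 0 → Tendsto (fun u => κ u ω) (nhds ρ) (nhds c)) :
    P[(entryEvent V t T).indicator f | F t]
      =ᵐ[P] P[(entryEvent V t T).indicator fun _ => c | F t] := by
  have hκ_int : ∀ u ∈ Ico t T, Integrable (κ u) P := fun u hu => integrable_condExp.congr (hκ u hu)
  refine tendsto_condExp_unique (gridEntryValue V (fun _ => f) t T) (gridEntryValue V κ t T) _ _
    (integrable_gridEntryValue hV htT fun _ _ => hf) (integrable_gridEntryValue hV htT hκ_int)
    ?_ ?_ (fun ω => |f ω|) hf.abs (fun _ => B) (integrable_const B) ?_ ?_ fun n => ?_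
  · filter_upwards [hVT] with ω hω
    exact tendsto_gridEntryValue htT (hV_cont ω) hω fun _ _ _ => tendsto_const_nhds
  · filter_upwards [hVT] with ω hω
    exact tendsto_gridEntryValue htT (hV_cont ω) hω (hκ_lim ω)
  · exact fun n => ae_of_all _ fun ω => abs_gridEntryValue_le (abs_nonneg _) fun _ _ => le_rfl
  · exact fun n => ae_of_all _ fun ω => abs_gridEntryValue_le hB fun u => hκ_bound u ω
  · refine condExp_sum_indicator_congr (fun i => F.mono (le_gridPoint htT.le n i))
      (fun i => F.le (gridPoint t T n i)) _ (measurableSet_gridEntry hV htT.le n) hf fun i hi => ?_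
    exact hκ _ ⟨le_gridPoint htT.le n i, gridPoint_lt htT (Finset.mem_Ioc.1 hi).2⟩

end GridEntry

section HitEvent

lemma measurableSet_exists_mem_of_isOpen {ι Ω β : Type*} [TopologicalSpace ι]
    [TopologicalSpace.SeparableSpace ι] [TopologicalSpace β] [MeasurableSpace β]
    [OpensMeasurableSpace β] [MeasurableSpace Ω] {X : ι → Ω → β} (hX : ∀ i, Measurable (X i))
    (hX_cont : ∀ ω, Continuous fun i => X i ω) {U : Set β} (hU : IsOpen U) :
    MeasurableSet {ω | ∃ i, X i ω ∈ U} := by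
  obtain ⟨D, hD_count, hD_dense⟩ := TopologicalSpace.exists_countable_dense ι
  have h_eq : {ω | ∃ i, X i ω ∈ U} = ⋃ i ∈ D, X i ⁻¹' U := by
    ext ω
    simp only [mem_ofPred_eq, mem_iUnion, mem_preimage, exists_prop]
    exact ⟨fun h => hD_dense.exists_mem_open (hU.preimage (hX_cont ω)) h, fun ⟨i, _, hi⟩ => ⟨i, hi⟩⟩
  rw [h_eq]
  exact .biUnion hD_count fun i _ => hX i hU.measurableSet

variable {Ω : Type*} {V : ℝ → Ω → ℝ} {t T : ℝ} {s : Set ℝ}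

/-- The event that the process `V` visits the set `s` during the time interval `[t, T]`. -/
def hitEvent (V : ℝ → Ω → ℝ) (s : Set ℝ) (t T : ℝ) : Set Ω :=
  {ω | ∃ u ∈ Icc t T, V u ω ∈ s}

lemma hitEvent_mono {s' : Set ℝ} (h : s ⊆ s') : hitEvent V s t T ⊆ hitEvent V s' t T :=
  fun _ ⟨u, hu, hus⟩ => ⟨u, hu, h hus⟩

lemma measurableSet_hitEvent [MeasurableSpace Ω] (hV : ∀ u, Measurable (V u))
    (hV_cont : ∀ ω, Continuous fun u => V u ω) (hs : IsOpen s) :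
    MeasurableSet (hitEvent V s t T) := by
  simpa [hitEvent] using measurableSet_exists_mem_of_isOpen (X := fun u : Icc t T => V u)
    (fun u => hV u) (fun ω => (hV_cont ω).comp continuous_subtype_val) hs

lemma eventually_mem_hitEvent_Ioi_iff {ω : Ω} (htT : t ≤ T) (hV : Continuous fun u => V u ω)
    {ε : ℕ → ℝ} (hε_pos : ∀ k, 0 < ε k) (hε : Tendsto ε atTop (nhds 0)) :
    ∀ᶠ k in atTop, ω ∈ hitEvent V (Ioi (-ε k)) t T ↔ ω ∈ hitEvent V (Ici 0) t T := by
  by_cases hω : ω ∈ hitEvent V (Ici 0) t T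
  · exact .of_forall fun k => iff_of_true
      (hitEvent_mono (Ici_subset_Ioi.2 (neg_neg_of_pos (hε_pos k))) hω) hω
  · obtain ⟨v, hv, h_max⟩ := isCompact_Icc.exists_isMaxOn (nonempty_Icc.2 htT) hV.continuousOn
    have h_neg : V v ω < 0 := by
      by_contra! h
      exact hω ⟨v, hv, h⟩
    filter_upwards [hε.eventually_lt_const (neg_pos.2 h_neg)] with k hk
    refine iff_of_false ?_ hω
    rintro ⟨u, hu, hu_gt⟩
    have := h_max hu
    simp only [mem_ofPred_eq, mem_Ioi] at this hu_gt
    linarith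

lemma measurableSet_hitEvent_Ici [MeasurableSpace Ω] (hV : ∀ u, Measurable (V u))
    (hV_cont : ∀ ω, Continuous fun u => V u ω) (htT : t ≤ T) :
    MeasurableSet (hitEvent V (Ici 0) t T) :=
  measurableSet_of_tendsto_indicator atTop
    (fun _ => measurableSet_hitEvent hV hV_cont isOpen_Ioi) fun ω =>
      eventually_mem_hitEvent_Ioi_iff htT (hV_cont ω) (fun _ => Nat.one_div_pos_of_nat)
        tendsto_one_div_add_atTop_nhds_zero_nat

lemma hitEvent_Ioi_driftedBM_add (W : ℝ → Ω → ℝ) (b ν ε : ℝ) :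
    hitEvent (driftedBM W (b + ε) ν) (Ioi 0) t T
      = hitEvent (driftedBM W b ν) (Ioi (-ε)) t T := by
  simp only [hitEvent, mem_Ioi, driftedBM_add, neg_lt_iff_pos_add]

namespace IsStdBM

variable {Ω : Type} [mΩ : MeasurableSpace Ω] {P : Measure Ω} {F : Filtration ℝ mΩ}
  {W : ℝ → Ω → ℝ} {t T : ℝ}

lemma indicator_entryEvent_reflectedPayoff_driftedBM (hW : IsStdBM P F W) (b ν : ℝ) (hT : 0 < T)
    (htT : t ≤ T) :
    (entryEvent (driftedBM W b ν) t T).indicator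
        (fun ω => reflectedPayoff ν (driftedBM W b ν T ω))
      =ᵐ[P] (driftedBM W b ν t ⁻¹' Iic 0).indicator
        fun ω => reflectedPayoff ν (driftedBM W b ν T ω) := by
  filter_upwards [hW.ae_driftedBM_ne_zero b ν hT] with ω hω
  rcases hω.lt_or_gt with h | h
  · have h_zero : reflectedPayoff ν (driftedBM W b ν T ω) = 0 := indicator_of_notMem h.not_ge _
    simp only [indicator, h_zero, ite_self]
  · have h_iff : ω ∈ entryEvent (driftedBM W b ν) t T ↔ ω ∈ driftedBM W b ν t ⁻¹' Iic 0 :=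
      ⟨And.left, fun h_le => ⟨h_le, T, ⟨htT, le_rfl⟩, h⟩⟩
    by_cases h_mem : ω ∈ driftedBM W b ν t ⁻¹' Iic 0
    · rw [indicator_of_mem h_mem, indicator_of_mem (h_iff.2 h_mem)]
    · rw [indicator_of_notMem h_mem, indicator_of_notMem (mt h_iff.1 h_mem)]

variable [IsFiniteMeasure P]

lemma condExp_entryEvent_driftedBM (hW : IsStdBM P F W) (b ν : ℝ) (ht : t ∈ Ico 0 T) :
    P[(entryEvent (driftedBM W b ν) t T).indicator fun _ => (1 : ℝ) | F t]
      =ᵐ[P] (driftedBM W b ν t ⁻¹' Iic 0).indicator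
        fun ω => hitProb ν (T - t) (driftedBM W b ν t ω) := by
  have hT : 0 < T := ht.1.trans_lt ht.2
  have h_int := hW.integrable_reflectedPayoff_driftedBM b ν hT.le
  have h_markov : ∀ u ∈ Ico t T, P[fun ω => reflectedPayoff ν (driftedBM W b ν T ω) | F u]
      =ᵐ[P] fun ω => hitProb ν (T - u) (driftedBM W b ν u ω) := fun u hu =>
    hW.condExp_reflectedPayoff_driftedBM b ν (ht.1.trans hu.1) hu.2
  have h_bound (u : ℝ) (ω : Ω) (h : driftedBM W b ν u ω ∈ Ioc 0 1) :
      |hitProb ν (T - u) (driftedBM W b ν u ω)| ≤ 1 + Real.exp (2 * |ν|) :=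
    (abs_of_nonneg hitProb_nonneg).trans_le
      (hitProb_le_of_abs_le_one ((abs_of_pos h.1).trans_le h.2))
  calc P[(entryEvent (driftedBM W b ν) t T).indicator fun _ => (1 : ℝ) | F t]
      =ᵐ[P] P[(entryEvent (driftedBM W b ν) t T).indicator
          (fun ω => reflectedPayoff ν (driftedBM W b ν T ω)) | F t] :=
        (condExp_indicator_entryEvent ht.2 (hW.measurable_driftedBM b ν)
          (hW.continuous_driftedBM b ν) (hW.ae_driftedBM_ne_zero b ν hT) h_int h_markov h_bound
          (by positivity) fun ω _ hu h_zero =>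
            tendsto_hitProb_one (hW.continuous_driftedBM b ν ω).continuousAt h_zero hu.2).symm
    _ =ᵐ[P] P[(driftedBM W b ν t ⁻¹' Iic 0).indicator
          (fun ω => reflectedPayoff ν (driftedBM W b ν T ω)) | F t] :=
        condExp_congr_ae (hW.indicator_entryEvent_reflectedPayoff_driftedBM b ν hT ht.2.le)
    _ =ᵐ[P] (driftedBM W b ν t ⁻¹' Iic 0).indicator
          (P[fun ω => reflectedPayoff ν (driftedBM W b ν T ω) | F t]) :=
        condExp_indicator h_int (hW.measurable_driftedBM b ν t measurableSet_Iic)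
    _ =ᵐ[P] _ := (h_markov t ⟨le_rfl, ht.2⟩).indicator

lemma condExp_hitEvent_Ioi_driftedBM (hW : IsStdBM P F W) (b ν : ℝ) (ht : t ∈ Ico 0 T) :
    P[(hitEvent (driftedBM W b ν) (Ioi 0) t T).indicator fun _ => (1 : ℝ) | F t]
      =ᵐ[P] fun ω => min (hitProb ν (T - t) (driftedBM W b ν t ω)) 1 := by
  set V := driftedBM W b ν
  have h_pos : MeasurableSet[F t] (V t ⁻¹' Ioi 0) :=
    hW.measurable_driftedBM b ν t measurableSet_Ioi
  have h_entry : hitEvent V (Ioi 0) t T \ V t ⁻¹' Ioi 0 = entryEvent V t T := by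
    ext ω
    rw [Set.mem_sdiff, mem_preimage, mem_Ioi, not_lt, and_comm]
    rfl
  have h_sub : V t ⁻¹' Ioi 0 ⊆ hitEvent V (Ioi 0) t T := fun ω hω => ⟨t, ⟨le_rfl, ht.2.le⟩, hω⟩
  have h_meas : MeasurableSet (entryEvent V t T) := h_entry ▸
    (measurableSet_hitEvent (hW.measurable_driftedBM' b ν) (hW.continuous_driftedBM b ν)
      isOpen_Ioi).diff (F.le t _ h_pos)
  have h_decomp : (hitEvent V (Ioi 0) t T).indicator (fun _ => (1 : ℝ))
      = (entryEvent V t T).indicator (fun _ => 1) + (V t ⁻¹' Ioi 0).indicator fun _ => 1 := by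
    rw [← h_entry, indicator_sdiff h_sub, sub_add_cancel]
  rw [h_decomp]
  refine (condExp_add ((integrable_const 1).indicator h_meas)
    ((integrable_const 1).indicator (F.le t _ h_pos)) (F t)).trans ?_
  rw [condExp_of_stronglyMeasurable (F.le t) (stronglyMeasurable_const.indicator h_pos)
    ((integrable_const 1).indicator (F.le t _ h_pos))]
  filter_upwards [hW.condExp_entryEvent_driftedBM b ν ht] with ω hω
  rw [Pi.add_apply, hω]
  have hτ := sub_pos.2 ht.2
  rcases le_or_gt (V t ω) 0 with h | h
  · simp [indicator, h, h.not_gt, V, min_eq_left (hitProb_le_one hτ h)]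
  · simp [indicator, h, h.not_ge, V, min_eq_right (one_le_hitProb hτ h.le)]

lemma condExp_hitEvent_Ici_driftedBM (hW : IsStdBM P F W) (b ν : ℝ) (ht : t ∈ Ico 0 T) :
    P[(hitEvent (driftedBM W b ν) (Ici 0) t T).indicator fun _ => (1 : ℝ) | F t]
      =ᵐ[P] fun ω => min (hitProb ν (T - t) (driftedBM W b ν t ω)) 1 := by
  let ε (k : ℕ) : ℝ := 1 / ((k : ℝ) + 1)
  have hε : Tendsto ε atTop (nhds 0) := tendsto_one_div_add_atTop_nhds_zero_nat
  let p (a : ℝ) (ω : Ω) : ℝ := min (hitProb ν (T - t) (driftedBM W b ν t ω + a)) 1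
  have hp_meas (a : ℝ) : StronglyMeasurable[F t] (p a) :=
    (((continuous_hitProb ν (T - t)).measurable.comp
      ((hW.measurable_driftedBM b ν t).add_const a)).min measurable_const).stronglyMeasurable
  have hp_bound (a : ℝ) (ω : Ω) : ‖p a ω‖ ≤ 1 :=
    (abs_of_nonneg (le_min hitProb_nonneg zero_le_one)).trans_le (min_le_right _ _)
  have hp_lim (ω : Ω) : Tendsto (fun k => p (ε k) ω) atTop (nhds (p 0 ω)) :=
    ((continuous_hitProb ν (T - t)).tendsto _).comp (hε.const_add _) |>.min tendsto_const_nhds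
  have hp_condExp (k : ℕ) : P[(hitEvent (driftedBM W b ν) (Ioi (-ε k)) t T).indicator
      fun _ => (1 : ℝ) | F t] =ᵐ[P] p (ε k) := by
    have h := hW.condExp_hitEvent_Ioi_driftedBM (b + ε k) ν ht
    simp only [hitEvent_Ioi_driftedBM_add, driftedBM_add] at h
    exact h
  have h_limit := condExp_indicator_one_of_tendsto (F.le t)
    (fun k => measurableSet_hitEvent (hW.measurable_driftedBM' b ν)
      (hW.continuous_driftedBM b ν) isOpen_Ioi)
    (fun ω => eventually_mem_hitEvent_Ioi_iff ht.2.le (hW.continuous_driftedBM b ν ω)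
      (fun k => Nat.one_div_pos_of_nat) hε)
    (fun k => hp_meas (ε k)) (fun k => hp_bound (ε k)) hp_lim hp_condExp
  simpa only [p, add_zero] using h_limit

lemma condExp_of_subset_hitEvent_driftedBM (hW : IsStdBM P F W) (b ν : ℝ)
    (ht : t ∈ Ico 0 T) {S : Set Ω} (hS_lower : hitEvent (driftedBM W b ν) (Ioi 0) t T ⊆ S)
    (hS_upper : S ⊆ hitEvent (driftedBM W b ν) (Ici 0) t T) :
    P[S.indicator fun _ => (1 : ℝ) | F t]
      =ᵐ[P] fun ω => min (hitProb ν (T - t) (driftedBM W b ν t ω)) 1 := by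
  have hV_meas := hW.measurable_driftedBM' b ν
  have hV_cont := hW.continuous_driftedBM b ν
  have h_Ioi := hW.condExp_hitEvent_Ioi_driftedBM b ν ht
  have h_ae := ae_eq_of_subset_of_condExp_indicator_ae_eq (F.le t) (hS_lower.trans hS_upper)
    (measurableSet_hitEvent hV_meas hV_cont isOpen_Ioi)
    (measurableSet_hitEvent_Ici hV_meas hV_cont ht.2.le)
    (h_Ioi.trans (hW.condExp_hitEvent_Ici_driftedBM b ν ht).symm)
  refine (condExp_congr_ae (indicator_ae_eq_of_ae_eq_set ?_)).trans h_Ioi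
  exact (hS_upper.eventuallyLE.trans h_ae.symm.le).antisymm hS_lower.eventuallyLE

end IsStdBM

end HitEvent

section RunningMaximumAndLastVisit

lemma le_ciSup_coe_iff_of_isCompact {β α : Type*} [TopologicalSpace β]
    [ConditionallyCompleteLinearOrder α] [TopologicalSpace α] [OrderTopology α] {s : Set β}
    (hs : IsCompact s) (hs_ne : s.Nonempty) {f : β → α} (hf : ContinuousOn f s) {c : α} :
    c ≤ ⨆ i : s, f i ↔ ∃ i ∈ s, c ≤ f i := by
  rw [← sSup_image']
  refine ⟨fun h => ?_, fun ⟨i, hi, hci⟩ =>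
    hci.trans (le_csSup (hs.image_of_continuousOn hf).bddAbove (mem_image_of_mem f hi))⟩
  obtain ⟨i, hi, h_eq⟩ := hs.exists_sSup_image_eq hs_ne hf
  exact ⟨i, hi, h.trans_eq h_eq⟩

variable {Ω : Type*} {V : ℝ → Ω → ℝ} {a c t T : ℝ}

lemma setOf_le_iSup_eq_hitEvent_Ici (hV : ∀ ω, Continuous fun u => V u ω) (htT : t ≤ T) :
    {ω | c ≤ ⨆ u : Icc t T, V u ω} = hitEvent V (Ici c) t T :=
  Set.ext fun ω => le_ciSup_coe_iff_of_isCompact isCompact_Icc (nonempty_Icc.2 htT)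
    (hV ω).continuousOn

lemma setOf_lt_sSup_subset_hitEvent_Ici (ht : 0 ≤ t) :
    {ω | t < sSup {u | u ∈ Icc a T ∧ c ≤ V u ω}} ⊆ hitEvent V (Ici c) t T := fun ω hω => by
  have h_ne : {u | u ∈ Icc a T ∧ c ≤ V u ω}.Nonempty := by
    by_contra! h_empty
    rw [mem_ofPred_eq, h_empty, Real.sSup_empty] at hω
    exact ht.not_gt hω
  obtain ⟨u, hu, htu⟩ := exists_lt_of_lt_csSup h_ne hω
  exact ⟨u, ⟨htu.le, hu.1.2⟩, hu.2⟩

lemma hitEvent_Ioi_subset_setOf_lt_sSup (hV : ∀ ω, Continuous fun u => V u ω) (hat : a ≤ t)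
    (htT : t < T) :
    hitEvent V (Ioi c) t T ⊆ {ω | t < sSup {u | u ∈ Icc a T ∧ c ≤ V u ω}} := by
  rintro ω ⟨u, hu, huc⟩
  have h_closure : u ∈ closure (Ioc t T) := by rwa [closure_Ioc htT.ne]
  obtain ⟨w, hwc, hw⟩ := mem_closure_iff.1 h_closure _ (isOpen_Ioi.preimage (hV ω)) huc
  exact hw.1.trans_le (le_csSup ⟨T, fun v hv => hv.1.2⟩ ⟨⟨hat.trans hw.1.le, hw.2⟩, le_of_lt hwc⟩)

end RunningMaximumAndLastVisit

section GeometricBM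

variable {Ω : Type} {W : ℝ → Ω → ℝ} {r σ L T t x : ℝ}

lemma GBM_eq_mul_exp_driftedBM (hσ : σ ≠ 0) (hL : 0 < L) (hx : 0 < x) (u : ℝ) (ω : Ω) :
    GBM r σ x W u ω
      = L * Real.exp (σ * driftedBM W (Real.log (x / L) / σ) ((r - σ ^ 2 / 2) / σ) u ω) := by
  have h_log : σ * driftedBM W (Real.log (x / L) / σ) ((r - σ ^ 2 / 2) / σ) u ω
      = Real.log (x / L) + ((r - σ ^ 2 / 2) * u + σ * W u ω) := by
    rw [driftedBM]
    field_simp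
    ring
  rw [h_log, Real.exp_add, Real.exp_log (by positivity), GBM, ← mul_assoc,
    mul_div_cancel₀ _ hL.ne']

lemma hitEvent_GBM_Ici (hσ : 0 < σ) (hL : 0 < L) (hx : 0 < x) :
    hitEvent (GBM r σ x W) (Ici L) t T
      = hitEvent (driftedBM W (Real.log (x / L) / σ) ((r - σ ^ 2 / 2) / σ)) (Ici 0) t T := by
  simp only [hitEvent, mem_Ici, GBM_eq_mul_exp_driftedBM hσ.ne' hL hx,
    le_mul_iff_one_le_right hL, Real.one_le_exp_iff, mul_nonneg_iff_of_pos_left hσ]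

lemma hitEvent_GBM_Ioi (hσ : 0 < σ) (hL : 0 < L) (hx : 0 < x) :
    hitEvent (GBM r σ x W) (Ioi L) t T
      = hitEvent (driftedBM W (Real.log (x / L) / σ) ((r - σ ^ 2 / 2) / σ)) (Ioi 0) t T := by
  simp only [hitEvent, mem_Ioi, GBM_eq_mul_exp_driftedBM hσ.ne' hL hx,
    lt_mul_iff_one_lt_right hL, Real.one_lt_exp_iff, mul_pos_iff_of_pos_left hσ]

lemma Zt_mul_exp (hσ : 0 < σ) (hL : 0 < L) (htT : t < T) (y : ℝ) :
    Zt r σ L T t (L * Real.exp (σ * y))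
      = min (hitProb ((r - σ ^ 2 / 2) / σ) (T - t) y) 1 := by
  have h_ratio : L / (L * Real.exp (σ * y)) = Real.exp (-(σ * y)) := by
    rw [Real.exp_neg]
    field_simp
  have h_arg (c : ℝ) : (σ * y + c) / (σ * √(T - t)) = (y + c / σ) / √(T - t) := by
    rw [← mul_div_mul_left (y + c / σ) _ hσ.ne', mul_add, mul_div_cancel₀ _ hσ.ne']
  have h_exp : -(σ * y) * (2 * r / σ ^ 2 - 1) = -(2 * ((r - σ ^ 2 / 2) / σ) * y) := by
    field_simp
  rw [Zt, if_pos htT, hitProb, h_ratio, Real.log_exp, neg_neg, ← Real.exp_mul, h_exp,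
    sub_eq_add_neg (σ * y), h_arg, h_arg, neg_div, ← sub_eq_add_neg, mul_div_right_comm]

variable [mΩ : MeasurableSpace Ω] {P : Measure Ω} {F : Filtration ℝ mΩ}

namespace IsStdBM

lemma continuous_GBM (hW : IsStdBM P F W) (r σ x : ℝ) (ω : Ω) :
    Continuous fun u => GBM r σ x W u ω := by
  have := hW.cont ω
  unfold GBM
  fun_prop

lemma condExp_of_subset_hitEvent_GBM [IsFiniteMeasure P] (hW : IsStdBM P F W)
    (hσ : 0 < σ) (hL : 0 < L) (hx : 0 < x) (ht : t ∈ Ico 0 T) {S : Set Ω}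
    (hS_lower : hitEvent (GBM r σ x W) (Ioi L) t T ⊆ S)
    (hS_upper : S ⊆ hitEvent (GBM r σ x W) (Ici L) t T) :
    P[S.indicator fun _ => (1 : ℝ) | F t] =ᵐ[P] fun ω => Zt r σ L T t (GBM r σ x W t ω) := by
  simp only [GBM_eq_mul_exp_driftedBM (r := r) hσ.ne' hL hx t, Zt_mul_exp hσ hL ht.2]
  rw [hitEvent_GBM_Ioi hσ hL hx] at hS_lower
  rw [hitEvent_GBM_Ici hσ hL hx] at hS_upper
  exact hW.condExp_of_subset_hitEvent_driftedBM _ _ ht hS_lower hS_upper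

end IsStdBM

end GeometricBM

theorem stmt_6_general {Ω : Type} [mΩ : MeasurableSpace Ω] (P : Measure Ω) [IsFiniteMeasure P]
    (F : Filtration ℝ mΩ) (W : ℝ → Ω → ℝ) (hW : IsStdBM P F W)
    (r σ L T : ℝ) (hσ : 0 < σ) (hL : 0 < L)
    (t : ℝ) (ht : t ∈ Ico (0 : ℝ) T) (x : ℝ) (hx : 0 < x) :
    (P[Set.indicator {ω | L ≤ ⨆ u : Icc t T, GBM r σ x W u ω} (fun _ => (1 : ℝ)) | F t]
        =ᵐ[P] fun ω => Zt r σ L T t (GBM r σ x W t ω)) ∧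
    (P[Set.indicator {ω | t < sSup {s : ℝ | s ∈ Icc (0 : ℝ) T ∧ L ≤ GBM r σ x W s ω}}
          (fun _ => (1 : ℝ)) | F t]
        =ᵐ[P] fun ω => Zt r σ L T t (GBM r σ x W t ω)) := by
  have h_cont := hW.continuous_GBM r σ x
  have h_cond (S : Set Ω) := hW.condExp_of_subset_hitEvent_GBM (r := r) (S := S) hσ hL hx ht
  refine ⟨h_cond _ ?_ ?_, h_cond _ ?_ ?_⟩
  · rw [setOf_le_iSup_eq_hitEvent_Ici h_cont ht.2.le]
    exact hitEvent_mono Ioi_subset_Ici_self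
  · exact (setOf_le_iSup_eq_hitEvent_Ici h_cont ht.2.le).subset
  · exact hitEvent_Ioi_subset_setOf_lt_sSup h_cont ht.1 ht.2
  · exact setOf_lt_sSup_subset_hitEvent_Ici ht.1

/-- For every `t ∈ [0, T)` and every `x > 0`, almost surely
`P(max_{t ≤ u ≤ T} X^x_u ≥ L | F_t) = Z(t, X^x_t)`; in particular the Azéma
supermartingale of the last exit time `θ = sup{t ∈ [0,T] : X^x_t ≥ L}` equals
`Z(t, X^x_t)`. -/
theorem stmt_6 {Ω : Type} [mΩ : MeasurableSpace Ω] (P : Measure Ω) [IsProbabilityMeasure P]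
    (F : Filtration ℝ mΩ) (W : ℝ → Ω → ℝ) (hW : IsStdBM P F W)
    (r σ L K T : ℝ) (hr : 0 < r) (hσ : 0 < σ) (hL : 0 < L) (hLK : L < K) (hT : 0 < T)
    (t : ℝ) (ht : t ∈ Ico (0 : ℝ) T) (x : ℝ) (hx : 0 < x) :
    (P[Set.indicator {ω | L ≤ ⨆ u : Icc t T, GBM r σ x W u ω} (fun _ => (1 : ℝ)) | F t]
        =ᵐ[P] fun ω => Zt r σ L T t (GBM r σ x W t ω)) ∧
    (P[Set.indicator {ω | t < sSup {s : ℝ | s ∈ Icc (0 : ℝ) T ∧ L ≤ GBM r σ x W s ω}}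
          (fun _ => (1 : ℝ)) | F t]
        =ᵐ[P] fun ω => Zt r σ L T t (GBM r σ x W t ω)) := by
  exact stmt_6_general P F W hW r σ L T hσ hL t ht x hx

end
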